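/- Let (Z, Y₁, H₁, Y₀), (Z, Y₂, H₂, Y₁) and (Z, Y₃, H₃, Y₂) be pre-wreath structures. Then (Z, Y₃, ⟨H₁, H₂, H₃⟩, Y₀) is a pre-wreath structure, and its carrier equals Y₀H₁H₂H₃ = {Y₀h₁h₂h₃ : h₁ ∈ H₁, h₂ ∈ H₂, h₃ ∈ H₃}. -/

import Mathlib

/-- A pre-wreath structure `(Z, Y, H, X)`: `H` is a nontrivial subgroup of `Sym(Z)`,
`X ⊆ Y ⊆ Z`, `X` nonempty, every element of `H` fixes every point outside `Y`,
if `Xh` meets `X` then `h` is the identity on `X`, and every nontrivial `h ∈ H`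
moves some set `Xj` (`j ∈ H`). (Images are written with Lean's left action, so the
set `Xh` of the paper is `⇑h '' X`.) -/
def IsPreWreath {Z : Type*} (Y : Set Z) (H : Subgroup (Equiv.Perm Z)) (X : Set Z) : Prop :=
  H ≠ ⊥ ∧
  (∀ h ∈ H, ∀ z : Z, z ∉ Y → h z = z) ∧
  X ⊆ Y ∧
  X.Nonempty ∧
  (∀ h ∈ H, (⇑h '' X ∩ X).Nonempty → ∀ x ∈ X, h x = x) ∧
  (∀ h ∈ H, h ≠ 1 → ∃ j ∈ H, ⇑h '' (⇑j '' X) ≠ ⇑j '' X)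

/-- The carrier `XH = {Xh : h ∈ H}` of a pre-wreath structure. -/
def wreathCarrier {Z : Type*} (H : Subgroup (Equiv.Perm Z)) (X : Set Z) : Set (Set Z) :=
  {A : Set Z | ∃ h ∈ H, A = ⇑h '' X}

/-- The support of a subgroup of `Sym(Z)`: the points moved by some element. -/
def Supp {Z : Type*} (K : Subgroup (Equiv.Perm Z)) : Set Z :=
  {z : Z | ∃ g ∈ K, g z ≠ z}

theorem pw_sup_induction {G : Type*} [Group G] (H K : Subgroup G) (P : G → Prop) (h1 : P 1)
    (hH : ∀ k ∈ H, ∀ g, P g → P (k * g)) (hK : ∀ k ∈ K, ∀ g, P g → P (k * g)) :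
    ∀ g ∈ H ⊔ K, P g := by
  let S : Subgroup G :=
    { carrier := {k | ∀ g, P (k * g) ↔ P g}
      one_mem' := by simp
      mul_mem' := by
        intro a b ha hb g
        rw [mul_assoc, ha, hb]
      inv_mem' := by
        intro a ha g
        have := ha (a⁻¹ * g)
        rw [mul_inv_cancel_left] at this
        exact this.symm }
  have key : ∀ L : Subgroup G, (∀ k ∈ L, ∀ g, P g → P (k * g)) → L ≤ S := by
    intro L hL k hk g
    refine ⟨fun h => ?_, hL k hk g⟩
    have := hL k⁻¹ (L.inv_mem hk) _ h
    rwa [inv_mul_cancel_left] at this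
  intro g hg
  have hgS : g ∈ S := sup_le (key H hH) (key K hK) hg
  have := (hgS 1).2 h1
  rwa [mul_one] at this

theorem pw_two {Z : Type*} (X Y W : Set Z) (H K : Subgroup (Equiv.Perm Z))
    (h1 : IsPreWreath Y H X) (h2 : IsPreWreath W K Y) :
    IsPreWreath W (H ⊔ K) X ∧
    wreathCarrier (H ⊔ K) X
      = {A : Set Z | ∃ g₁ ∈ H, ∃ g₂ ∈ K, A = ⇑g₂ '' (⇑g₁ '' X)} := by
  obtain ⟨nH, sH, XY, Xne, bH, fH⟩ := h1
  obtain ⟨nK, sK, YW, Yne, bK, fK⟩ := h2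
  have pH : ∀ h ∈ H, ∀ y ∈ Y, h y ∈ Y := by
    intro h hh y hy
    by_contra hc
    have h3 := sH h hh _ hc
    have h4 := h.injective h3
    rw [h4] at hc
    exact hc hy
  have bK' : ∀ k ∈ K, ∀ y ∈ Y, k y ∈ Y → ∀ x ∈ Y, k x = x := fun k hk y hy hky =>
    bK k hk ⟨k y, ⟨y, hy, rfl⟩, hky⟩
  have bH' : ∀ k ∈ H, ∀ y ∈ X, k y ∈ X → ∀ x ∈ X, k x = x := fun k hk y hy hky =>
    bH k hk ⟨k y, ⟨y, hy, rfl⟩, hky⟩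
  have A : ∀ g ∈ H ⊔ K, ∃ a ∈ H, ∃ b ∈ K, ∀ y ∈ Y, g y = b (a y) := by
    apply pw_sup_induction
    · exact ⟨1, H.one_mem, 1, K.one_mem, by simp⟩
    · rintro k hk g ⟨a, ha, b, hb, hg⟩
      by_cases hc : ∃ y ∈ Y, b y ∈ Y
      · obtain ⟨y, hy, hby⟩ := hc
        refine ⟨k * a, H.mul_mem hk ha, 1, K.one_mem, fun z hz => ?_⟩
        simp [hg z hz, bK' b hb y hy hby _ (pH a ha z hz)]
      · push Not at hc
        refine ⟨a, ha, b, hb, fun z hz => ?_⟩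
        simp [hg z hz, sH k hk _ (hc _ (pH a ha z hz))]
    · rintro k hk g ⟨a, ha, b, hb, hg⟩
      exact ⟨a, ha, k * b, K.mul_mem hk hb, fun z hz => by simp [hg z hz]⟩
  have A' : ∀ g ∈ H ⊔ K, (∃ y ∈ Y, g y ∈ Y) → ∃ a ∈ H, ∀ y ∈ Y, g y = a y := by
    rintro g hg ⟨y, hy, hgy⟩
    obtain ⟨a, ha, b, hb, hab⟩ := A g hg
    refine ⟨a, ha, fun z hz => ?_⟩
    rw [hab y hy] at hgy
    rw [hab z hz, bK' b hb _ (pH a ha y hy) hgy _ (pH a ha z hz)]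
  have bG : ∀ g ∈ H ⊔ K, ∀ y ∈ X, g y ∈ X → ∀ x ∈ X, g x = x := by
    intro g hg y hy hgy x hx
    obtain ⟨a, ha, haa⟩ := A' g hg ⟨y, XY hy, XY hgy⟩
    rw [haa y (XY hy)] at hgy
    rw [haa x (XY hx), bH' a ha y hy hgy x hx]
  have B : ∀ g ∈ H ⊔ K, ∃ b ∈ K, (∀ x, ∀ j ∈ K, j (g x) ∈ Y ↔ j (b x) ∈ Y) ∧
      ∀ x, (∀ j ∈ K, j x ∉ Y) → g x = b x := by
    apply pw_sup_induction
    · exact ⟨1, K.one_mem, by simp⟩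
    · rintro k hk g ⟨b, hb, hg1, hg2⟩
      refine ⟨b, hb, fun x j hj => ?_, fun x hx => ?_⟩
      · rw [← hg1 x j hj, Equiv.Perm.mul_apply]
        by_cases hy : g x ∈ Y
        · have hy' := pH k hk _ hy
          constructor
          · intro h
            rw [bK' j hj _ hy' h _ hy]; exact hy
          · intro h
            rw [bK' j hj _ hy h _ hy']; exact hy'
        · rw [sH k hk _ hy]
      · rw [Equiv.Perm.mul_apply, hg2 x hx]
        exact sH k hk _ (hx b hb)
    · rintro k hk g ⟨b, hb, hg1, hg2⟩
      refine ⟨k * b, K.mul_mem hk hb, fun x j hj => ?_, fun x hx => ?_⟩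
      · exact hg1 x (j * k) (K.mul_mem hj hk)
      · simp [hg2 x hx]
  have HG : H ≤ H ⊔ K := le_sup_left
  have KG : K ≤ H ⊔ K := le_sup_right
  refine ⟨⟨?_, ?_, XY.trans YW, Xne, ?_, ?_⟩, ?_⟩
  · intro h
    rw [h] at HG
    exact nH (le_bot_iff.1 HG)
  · apply pw_sup_induction
    · simp
    · intro k hk g hg z hz
      rw [Equiv.Perm.mul_apply, hg z hz]
      exact sH k hk z fun h => hz (YW h)
    · intro k hk g hg z hz
      rw [Equiv.Perm.mul_apply, hg z hz]
      exact sK k hk z hz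
  · rintro g hg ⟨_, ⟨y, hy, rfl⟩, hgy⟩
    exact bG g hg y hy hgy
  · intro g hg hne
    by_contra hc
    push Not at hc
    apply hne
    have F0 : ∀ j ∈ H ⊔ K, ∀ x ∈ X, g (j x) = j x := by
      intro j hj x hx
      have h3 : g (j x) ∈ j '' X := by
        rw [← hc j hj]; exact ⟨_, ⟨x, hx, rfl⟩, rfl⟩
      obtain ⟨y, hy, hyx⟩ := h3
      have h4 := bG (j⁻¹ * g * j) (mul_mem (mul_mem (inv_mem hj) hg) hj) x hx
        (by simpa [← hyx] using hy) x hx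
      simpa [Equiv.symm_apply_eq] using h4
    have F1 : ∀ j ∈ H ⊔ K, ∀ y ∈ Y, g (j y) = j y := by
      intro j hj y hy
      obtain ⟨x0, hx0⟩ := Xne
      obtain ⟨a, ha, haa⟩ := A' (j⁻¹ * g * j) (mul_mem (mul_mem (inv_mem hj) hg) hj)
        ⟨x0, XY hx0, by simpa [F0 j hj x0 hx0] using XY hx0⟩
      have a1 : a = 1 := by
        by_contra hne
        obtain ⟨k, hk, hkk⟩ := fH a ha hne
        apply hkk
        rw [Set.image_image]
        apply Set.image_congr
        intro x hx
        rw [← haa _ (pH k hk x (XY hx))]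
        have := F0 (j * k) (mul_mem hj (HG hk)) x hx
        simp only [Equiv.Perm.mul_apply] at this ⊢
        rw [this]; simp
      have h4 := haa y hy
      rw [a1] at h4
      simpa [Equiv.symm_apply_eq] using h4
    obtain ⟨b, hb, hb1, hb2⟩ := B g hg
    have b1 : b = 1 := by
      by_contra hne
      obtain ⟨k, hk, hkk⟩ := fK b hb hne
      apply hkk
      rw [Set.image_image]
      apply Set.image_congr
      intro x hx
      have h5 : k⁻¹ (b (k x)) ∈ Y := by
        rw [← hb1 _ _ (inv_mem hk), F1 k (KG hk) x hx]; simpa using hx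
      have h4 := bK' (k⁻¹ * b * k) (mul_mem (mul_mem (inv_mem hk) hb) hk) x hx h5 x hx
      simpa [Equiv.symm_apply_eq] using h4
    ext x
    by_cases hx : ∀ j ∈ K, j x ∉ Y
    · rw [hb2 x hx, b1]
    · push Not at hx
      obtain ⟨j, hj, hjx⟩ := hx
      simpa using F1 j⁻¹ (inv_mem (KG hj)) _ hjx
  · ext S
    constructor
    · rintro ⟨g, hg, rfl⟩
      obtain ⟨a, ha, b, hb, hab⟩ := A g hg
      refine ⟨a, ha, b, hb, ?_⟩
      rw [Set.image_image]
      exact Set.image_congr fun x hx => hab x (XY hx)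
    · rintro ⟨a, ha, b, hb, rfl⟩
      refine ⟨b * a, mul_mem (KG hb) (HG ha), ?_⟩
      rw [Set.image_image]; rfl


/-- If `(Z, Y₁, H₁, Y₀)`, `(Z, Y₂, H₂, Y₁)`, and `(Z, Y₃, H₃, Y₂)` are
pre-wreath structures, then `(Z, Y₃, ⟨H₁, H₂, H₃⟩, Y₀)` is a pre-wreath structure and
its carrier equals `{Y₀h₁h₂h₃ : hᵢ ∈ Hᵢ}` (apply `h₁` first, then `h₂`, then `h₃`). -/
theorem stmt10 {Z : Type*} (Y₀ Y₁ Y₂ Y₃ : Set Z)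
    (H₁ H₂ H₃ : Subgroup (Equiv.Perm Z))
    (h1 : IsPreWreath Y₁ H₁ Y₀) (h2 : IsPreWreath Y₂ H₂ Y₁)
    (h3 : IsPreWreath Y₃ H₃ Y₂) :
    IsPreWreath Y₃ (H₁ ⊔ H₂ ⊔ H₃) Y₀ ∧
    wreathCarrier (H₁ ⊔ H₂ ⊔ H₃) Y₀
      = {A : Set Z | ∃ g₁ ∈ H₁, ∃ g₂ ∈ H₂, ∃ g₃ ∈ H₃,
          A = ⇑g₃ '' (⇑g₂ '' (⇑g₁ '' Y₀))} := by
  obtain ⟨p12, c12⟩ := pw_two _ _ _ _ _ h1 h2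
  obtain ⟨p, c⟩ := pw_two _ _ _ _ _ p12 h3
  refine ⟨p, ?_⟩
  rw [c]
  ext S
  constructor
  · rintro ⟨g, hg, g₃, hg₃, rfl⟩
    have : (⇑g '' Y₀) ∈ wreathCarrier (H₁ ⊔ H₂) Y₀ := ⟨g, hg, rfl⟩
    rw [c12] at this
    obtain ⟨a, ha, b, hb, hab⟩ := this
    exact ⟨a, ha, b, hb, g₃, hg₃, by rw [hab]⟩
  · rintro ⟨a, ha, b, hb, g₃, hg₃, rfl⟩
    have : (⇑b '' (⇑a '' Y₀)) ∈ wreathCarrier (H₁ ⊔ H₂) Y₀ := by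
      rw [c12]; exact ⟨a, ha, b, hb, rfl⟩
    obtain ⟨g, hg, hgg⟩ := this
    exact ⟨g, hg, g₃, hg₃, by rw [hgg]⟩
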